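/- Let X be a sample path of the block Markov chain starting in equilibrium, let ε ∈ [0,1/2] and r₀ ∈ ℤ≥1 be such that Δ(r) ≤ ε for all r ≥ r₀, and let k₁, k₂ ∈ {1,…,K}. Then for any directed edge e ∈ V_{k₁} × V_{k₂} which is not a self-loop, d_TV(law(N_{X,e}), Poisson(ℓ π(k₁) p_{k₁,k₂}/(#V_{k₁}·#V_{k₂}))) ≤ ℓ π(k₁) p_{k₁,k₂}·((4r₀ − 1)/((#V_{k₁})²(#V_{k₂})²) + 12ε/(#V_{k₁}·#V_{k₂})); and for any self-loop e = (v,v) with v ∈ V_{k₁}, d_TV(law(N_{X,e}), Poisson(ℓ π(k₁) p_{k₁,k₁}/(#V_{k₁})²)) ≤ ℓ π(k₁) p_{k₁,k₁}·((4r₀ − 1)/(#V_{k₁})⁴ + 2/(#V_{k₁})³ + 12ε/(#V_{k₁})²). -/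

import Mathlib

/-!
The bound is an instance of the Chen–Stein method with local dependence.

Write `W = ∑ I_t`, where `I_t` indicates that the edge `(i, j)` is traversed at time `t`, and let
`q = E I_t = Π(i) P(i, j)`, `r = ℓ q`. For `r > 0` and a finite set `A ⊆ ℕ` there is a solution `f` of
the Stein equation `r f(k+1) - k f(k) = 1_A(k) - Poisson(r)(A)` with `|f(k+1) - f(k)| ≤ 1` and
`|f(k)| ≤ 3` for `k ≥ 1` (`stein_exists`). Hence
`P(W ∈ A) - Poisson(r)(A) = ∑_t E[q f(W+1) - I_t f(W)]`, and discarding from `W` the times within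
distance `r₀` of `t` bounds (`chen_stein`) the summand of index `t` by the sum of

* `q ∑_{|s-t| ≤ r₀} E I_s ≤ (2 r₀ + 1) q²`,
* `∑_{0 < |s-t| ≤ r₀} E[I_t I_s]`, where `E[I_t I_{t+1+d}] = q P^d(j, i) P(i, j)`
  (`pathExp_hit_hit`); the two terms with `d = 0` vanish unless the edge is a self-loop,
* `E[(q - I_t) f(W_t + 1)]`, where `W_t` depends only on the path up to time `t - r₀` and from time
  `t + 1 + r₀` on. As `P^{r₀}(x, i) P(i, j) P^{r₀}(j, y)` and `q P^{2r₀+1}(x, y)` differ by at most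
  `(7/2) ε q Π(y)`, this is at most `3 · (7/2) ε q ≤ 12 ε q` (`pathExp_decouple`).

Taking for `A` the set where the law of `W` exceeds the Poisson law turns this into the total
variation bound (`tv_eq`, `chain_tv`).

Expectations over paths are computed with operators on functions of an infinite sequence `ω : ℕ → S`:
`stepOp P a` averages out the coordinate `a + 1` given the coordinate `a`, so the Markov property
becomes bookkeeping about which coordinates a function depends on. To avoid boundary cases the path
is extended by `r₀` stationary steps on either side; `localise` shows that this is harmless.
-/

open MeasureTheory ProbabilityTheory Filter Matrix
open scoped ENNReal NNReal BigOperators Topology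

noncomputable section

/-- number of vertices in cluster `k` -/
def clusterCard {K : ℕ} (n : ℕ) (σ : Fin n → Fin K) (k : Fin K) : ℕ :=
  (Finset.univ.filter fun v : Fin n => σ v = k).card

/-- transition matrix of the block Markov chain -/
def bmcTrans {K n : ℕ} (p : Matrix (Fin K) (Fin K) ℝ) (σ : Fin n → Fin K)
    (x y : Fin n) : ℝ :=
  p (σ x) (σ y) / (clusterCard n σ (σ y) : ℝ)

/-- equilibrium distribution of the block Markov chain -/
def bmcEquilib {K n : ℕ} (pst : Fin K → ℝ) (σ : Fin n → Fin K) (v : Fin n) : ℝ :=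
  pst (σ v) / (clusterCard n σ (σ v) : ℝ)

/-- law of a sample path of length `ℓ+1` with one-step transition probabilities `P`
and initial distribution `ι` -/
def pathLaw (n ℓ : ℕ) (P : Fin n → Fin n → ℝ) (ι : Fin n → ℝ) :
    Measure (Fin (ℓ + 1) → Fin n) :=
  ∑ x : Fin (ℓ + 1) → Fin n,
    ENNReal.ofReal (ι (x 0) * ∏ t : Fin ℓ, P (x t.castSucc) (x t.succ)) • Measure.dirac x

/-- the number `N_{X,e}` of traversals of the directed edge `e` -/
def edgeCount (n ℓ : ℕ) (ω : Fin (ℓ + 1) → Fin n) (e : Fin n × Fin n) : ℕ :=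
  (Finset.univ.filter fun t : Fin ℓ => ω t.castSucc = e.1 ∧ ω t.succ = e.2).card

/-- probability mass function of the Poisson distribution with mean `r` -/
def poissonPMF (r : ℝ) (k : ℕ) : ℝ := Real.exp (-r) * r ^ k / (Nat.factorial k)

/-- total variation distance between the law of `N_{X,e}` and a Poisson distribution -/
def dTVpoisson {n ℓ : ℕ} (μ : Measure (Fin (ℓ + 1) → Fin n)) (e : Fin n × Fin n)
    (r : ℝ) : ℝ :=
  (1 / 2) * ∑' k : ℕ, |(μ {ω | edgeCount n ℓ ω e = k}).toReal - poissonPMF r k|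

open Function

/-! ### The Poisson distribution and the Stein equation -/

theorem poissonPMF_hasSum (r : ℝ) : HasSum (_root_.poissonPMF r) 1 := by
  have h := (NormedSpace.expSeries_div_hasSum_exp (𝔸 := ℝ) r).mul_left (Real.exp (-r))
  rw [← Real.exp_eq_exp_ℝ, ← Real.exp_add, neg_add_cancel, Real.exp_zero] at h
  refine h.congr_fun ?_ |> fun h => h
  intro k
  simp [_root_.poissonPMF, mul_div_assoc]

theorem poissonPMF_nonneg {r : ℝ} (hr : 0 ≤ r) (k : ℕ) : 0 ≤ _root_.poissonPMF r k := by
  unfold _root_.poissonPMF; positivity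

theorem poissonPMF_pos {r : ℝ} (hr : 0 < r) (k : ℕ) : 0 < _root_.poissonPMF r k := by
  unfold _root_.poissonPMF; positivity

theorem poissonPMF_succ (r : ℝ) (k : ℕ) :
    ((k : ℝ) + 1) * _root_.poissonPMF r (k + 1) = r * _root_.poissonPMF r k := by
  unfold _root_.poissonPMF
  rw [Nat.factorial_succ]
  push_cast
  field_simp
  ring

/-- With `w` the Poisson(`r`) weights, `r w_j = (j+1) w_{j+1}`, so that
`r · Poisson(< k) = ∑_{1 ≤ m ≤ k} m w_m ≤ k · Poisson([1, k])`. -/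
theorem poisson_lower (r : ℝ) (hr : 0 ≤ r) (k : ℕ) :
    r * ∑ j ∈ Finset.range k, _root_.poissonPMF r j
      ≤ k * (∑ j ∈ Finset.range (k + 1), _root_.poissonPMF r j - _root_.poissonPMF r 0) := by
  rw [Finset.sum_range_succ', add_sub_cancel_right, Finset.mul_sum, Finset.mul_sum]
  refine Finset.sum_le_sum fun j hj => ?_
  rw [← poissonPMF_succ]
  have : ((j : ℝ) + 1) ≤ k := by exact_mod_cast Finset.mem_range.1 hj
  exact mul_le_mul_of_nonneg_right this (poissonPMF_nonneg hr _)

/-- With `w` the Poisson(`r`) weights,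
`r · Poisson(≥ k) = ∑_{m > k} m w_m ≥ k · Poisson(> k)`. -/
theorem poisson_upper (r : ℝ) (hr : 0 ≤ r) (k : ℕ) :
    k * (1 - ∑ j ∈ Finset.range (k + 1), _root_.poissonPMF r j)
      ≤ r * (1 - ∑ j ∈ Finset.range k, _root_.poissonPMF r j) := by
  have h1 := ((hasSum_nat_add_iff' (k + 1)).2 (poissonPMF_hasSum r)).mul_left (k : ℝ)
  have h2 := ((hasSum_nat_add_iff' k).2 (poissonPMF_hasSum r)).mul_left r
  refine hasSum_le (fun m => ?_) h1 h2
  rw [← poissonPMF_succ, ← add_assoc]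
  have : (k : ℝ) ≤ ((m + k : ℕ) : ℝ) + 1 := by push_cast; linarith [Nat.cast_nonneg (α := ℝ) m]
  exact mul_le_mul_of_nonneg_right this (poissonPMF_nonneg hr _)

/-- The linear estimate behind the bound on the increments of the Stein solution at `k`. In its use,
`S`, `w`, `T` are the Poisson masses of `[0, k)`, `{k}`, `(k, ∞)`, and `H`, `w * h`, `R` those of the
intersections of these sets with `A`. The quantity in absolute values is
`-α H - β R + w (k T + l S) h` with `α, β ≥ 0` and `α S + β T = w (k T + l S)`. -/
theorem stein_algebra {l k H S T R w h : ℝ} (hH0 : 0 ≤ H) (hHS : H ≤ S) (hR0 : 0 ≤ R) (hRT : R ≤ T)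
    (h0 : 0 ≤ h) (h1 : h ≤ 1) (hw : 0 ≤ w) (hk : 0 ≤ k) (hl : 0 ≤ l) (hST : S + w + T = 1)
    (hα : k * T ≤ l * (T + w)) (hβ : l * S ≤ k * (S + w)) :
    |k * (H + w * h - (H + w * h + R) * (S + w)) - l * (H - (H + w * h + R) * S)|
      ≤ w * (k * T + l * S) := by
  obtain rfl : T = 1 - S - w := by linarith
  have e : k * (H + w * h - (H + w * h + R) * (S + w)) - l * (H - (H + w * h + R) * S)
      = -(l * ((1 - S - w) + w) - k * (1 - S - w)) * H - (k * (S + w) - l * S) * R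
        + w * (k * (1 - S - w) + l * S) * h := by ring
  have a0 : 0 ≤ l * ((1 - S - w) + w) - k * (1 - S - w) := by linarith
  have b0 : 0 ≤ k * (S + w) - l * S := by linarith
  have c0 : 0 ≤ w * (k * (1 - S - w) + l * S) := by
    have : 0 ≤ 1 - S - w := by linarith
    have : 0 ≤ S := by linarith
    positivity
  rw [e, abs_le]
  constructor
  · have x1 := mul_le_mul_of_nonneg_left hHS a0
    have x2 := mul_le_mul_of_nonneg_left hRT b0
    have x3 := mul_nonneg c0 h0
    linarith
  · have x1 := mul_nonneg a0 hH0
    have x2 := mul_nonneg b0 hR0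
    have x3 := mul_le_mul_of_nonneg_left h1 c0
    linarith

/-- Solution of the Poisson Stein equation for the indicator of a finite set `A`, with bounds on its
increments and its size. The size bound follows from the increment bound: the equation reads
`(r - k) f(k) = 1_A(k) - Poisson(A) - r (f(k+1) - f(k))`, so `|f(k)| ≤ 2` once `|r - k| ≥ 1`, and the
remaining `k` are at most one step away from such a point (or `k = 1 < r`). -/
theorem stein_exists {r : ℝ} (hr : 0 < r) (A : Finset ℕ) :
    ∃ f : ℕ → ℝ,
      (∀ k : ℕ, r * f (k + 1) - k * f k
        = (if k ∈ A then 1 else 0) - ∑ j ∈ A, _root_.poissonPMF r j) ∧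
      (∀ k, 1 ≤ k → |f (k + 1) - f k| ≤ 1) ∧ (∀ k, 1 ≤ k → |f k| ≤ 3) := by
  set w := _root_.poissonPMF r with hwdef
  have w0 : ∀ k, 0 < w k := poissonPMF_pos hr
  have ws : ∀ k : ℕ, ((k : ℝ) + 1) * w (k + 1) = r * w k := poissonPMF_succ r
  set h : ℕ → ℝ := fun k => if k ∈ A then 1 else 0 with hdef
  set c := ∑ j ∈ A, w j with hc
  have le1 : ∀ B : Finset ℕ, ∑ j ∈ B, w j ≤ 1 := fun B =>
    sum_le_hasSum B (fun i _ => (w0 i).le) (poissonPMF_hasSum r)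
  have c0 : 0 ≤ c := Finset.sum_nonneg fun i _ => (w0 i).le
  have c1 : c ≤ 1 := le1 A
  have h01 : ∀ k, 0 ≤ h k ∧ h k ≤ 1 := by
    intro k; simp only [hdef]; split_ifs <;> norm_num
  -- explicit solution: `k w_k f(k) = ∑_{j < k} w_j (h_j - c)`
  let G : ℕ → ℝ := fun k => ∑ j ∈ Finset.range k, w j * (h j - c)
  let f : ℕ → ℝ := fun k => G k / (k * w k)
  have fs : ∀ k : ℕ, f (k + 1) = G (k + 1) / (r * w k) := by
    intro k; simp only [f]; push_cast; rw [ws]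
  have stein : ∀ k : ℕ, r * f (k + 1) - k * f k = h k - c := by
    intro k
    have hk := (w0 k).ne'
    have e1 : r * f (k + 1) = G (k + 1) / w k := by rw [fs]; field_simp
    have e2 : (k : ℝ) * f k = G k / w k := by
      rcases Nat.eq_zero_or_pos k with rfl | hk'
      · simp [G]
      · have : (k : ℝ) ≠ 0 := by positivity
        simp only [f]; field_simp
    have e3 : G (k + 1) = G k + w k * (h k - c) := by simp [G, Finset.sum_range_succ]
    rw [e1, e2, e3]; field_simp; ring
  have diff : ∀ k, 1 ≤ k → |f (k + 1) - f k| * r ≤ 1 - Real.exp (-r) := by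
    intro k hk
    have hk' : (0 : ℝ) < k := by exact_mod_cast hk
    have hwk := w0 k
    set S := ∑ j ∈ Finset.range k, w j with hS
    set H := ∑ j ∈ Finset.range k, w j * h j with hH
    have eS : ∑ j ∈ Finset.range (k + 1), w j = S + w k := Finset.sum_range_succ _ _
    have eG : G k = H - c * S := by
      simp only [G, hH, hS, mul_sub, Finset.sum_sub_distrib, mul_comm c, Finset.sum_mul]
    have eG1 : G (k + 1) = H + w k * h k - c * (S + w k) := by
      have : G (k + 1) = G k + w k * (h k - c) := by simp [G, Finset.sum_range_succ]
      rw [this, eG]; ring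
    have eH : H + w k * h k = ∑ j ∈ Finset.range (k + 1) ∩ A, w j := by
      rw [hH, ← Finset.sum_range_succ (fun j => w j * h j), ← Finset.filter_mem_eq_inter,
        Finset.sum_filter]
      simp [hdef]
    have hR0 : 0 ≤ c - (H + w k * h k) := by
      rw [eH, sub_nonneg]
      exact Finset.sum_le_sum_of_subset_of_nonneg Finset.inter_subset_right
        fun i _ _ => (w0 i).le
    have hRT : c - (H + w k * h k) ≤ 1 - (S + w k) := by
      have := Finset.sum_union_inter (s₁ := Finset.range (k + 1)) (s₂ := A) (f := w)
      have := le1 (Finset.range (k + 1) ∪ A)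
      rw [eH]; linarith
    have hlow := poisson_lower r hr.le k
    have hup := poisson_upper r hr.le k
    rw [← hwdef, eS, ← hS] at hlow hup
    have hw00 : w 0 = Real.exp (-r) := by simp [hwdef, _root_.poissonPMF]
    rw [hw00] at hlow
    have alg := stein_algebra (l := r) (k := k) (H := H) (S := S) (T := 1 - (S + w k))
      (R := c - (H + w k * h k)) (w := w k) (h := h k)
      (Finset.sum_nonneg fun i _ => mul_nonneg (w0 i).le (h01 i).1)
      (Finset.sum_le_sum fun i _ => mul_le_of_le_one_right (w0 i).le (h01 i).2)
      hR0 hRT (h01 k).1 (h01 k).2 hwk.le hk'.le hr.le (by ring) (by linarith)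
      (by nlinarith [Real.exp_pos (-r)])
    have ec : H + w k * h k + (c - (H + w k * h k)) = c := by ring
    rw [ec, ← eG1, ← eG] at alg
    have ef : f (k + 1) - f k = (k * G (k + 1) - r * G k) / (r * k * w k) := by
      rw [fs]; simp only [f]; field_simp
    rw [ef, abs_div, abs_of_pos (by positivity : 0 < r * k * w k), div_mul_eq_mul_div,
      div_le_iff₀ (by positivity)]
    have : w k * (k * (1 - (S + w k)) + r * S) ≤ w k * (k * (1 - Real.exp (-r))) :=
      mul_le_mul_of_nonneg_left (by linarith) hwk.le
    nlinarith [alg, this, hr]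
  have ex1 : 1 - Real.exp (-r) ≤ r := by linarith [Real.add_one_le_exp (-r)]
  have d1 : ∀ k, 1 ≤ k → |f (k + 1) - f k| ≤ 1 := by
    intro k hk
    have := (diff k hk).trans ex1
    by_contra hcon
    push Not at hcon
    nlinarith
  -- away from `r`, the Stein equation itself bounds `f`
  have far : ∀ k : ℕ, 1 ≤ k → 1 ≤ |r - k| → |f k| ≤ 2 := by
    intro k hk hfar
    have e : (r - k) * f k = (h k - c) - r * (f (k + 1) - f k) := by
      have := stein k; linarith
    have b : |(h k - c) - r * (f (k + 1) - f k)| ≤ 2 := by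
      refine (abs_sub _ _).trans ?_
      have b1 : |h k - c| ≤ 1 := by
        rw [abs_le]; constructor <;> linarith [(h01 k).1, (h01 k).2]
      have b2 : |r * (f (k + 1) - f k)| ≤ 1 := by
        rw [abs_mul, abs_of_pos hr, mul_comm]
        linarith [diff k hk, Real.exp_pos (-r)]
      linarith
    rw [← e, abs_mul] at b
    nlinarith [abs_nonneg (f k)]
  refine ⟨f, stein, d1, fun k hk => ?_⟩
  by_cases hfar : 1 ≤ |r - k|
  · linarith [far k hk hfar]
  push Not at hfar
  rw [abs_lt] at hfar
  rcases le_or_gt r k with hrk | hrk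
  · have h2 := far (k + 1) (by omega) (by
      push_cast; rw [abs_of_nonpos (by linarith)]; linarith)
    have h3 := d1 k hk
    rw [abs_le] at *
    constructor <;> linarith [h2.1, h2.2, h3.1, h3.2]
  · rcases Nat.lt_or_ge 1 k with h1k | h1k
    · obtain ⟨m, rfl⟩ : ∃ m, k = m + 1 := ⟨k - 1, by omega⟩
      push_cast at hrk hfar
      have h2 := far m (by omega) (by rw [abs_of_nonneg (by linarith)]; linarith)
      have h3 := d1 m (by omega)
      rw [abs_le] at *
      constructor <;> linarith [h2.1, h2.2, h3.1, h3.2]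
    · obtain rfl : k = 1 := by omega
      have h2 := stein 0
      have h3 := h01 0
      push_cast at hrk
      simp only [zero_add, Nat.cast_zero, zero_mul, sub_zero] at h2
      have : |r * f 1| ≤ 1 := by rw [h2, abs_le]; constructor <;> linarith
      rw [abs_mul, abs_of_pos hr] at this
      nlinarith [abs_nonneg (f 1)]

/-! ### Markov averaging operators on functions of a sequence -/

section Chain

variable {S : Type*}

/-- The function `g` of a sequence does not depend on the coordinate `c`. -/
def IndepCoord (g : (ℕ → S) → ℝ) (c : ℕ) : Prop := ∀ ω y, g (update ω c y) = g ω

theorem IndepCoord.mul {f g : (ℕ → S) → ℝ} {c : ℕ} (hf : IndepCoord f c) (hg : IndepCoord g c) :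
    IndepCoord (f * g) c := fun ω y => by simp only [Pi.mul_apply, hf ω y, hg ω y]

variable [Fintype S]

/-- One Markov step: resample the coordinate `a + 1` from `P (ω a)` and average. -/
def stepOp (P : Matrix S S ℝ) (a : ℕ) : ((ℕ → S) → ℝ) →ₗ[ℝ] ((ℕ → S) → ℝ) where
  toFun g ω := ∑ y, P (ω a) y * g (update ω (a + 1) y)
  map_add' f g := by ext ω; simp [mul_add, Finset.sum_add_distrib]
  map_smul' c f := by ext ω; simp [Finset.mul_sum, mul_left_comm]

/-- Sample the coordinate `a` from `ι` and average. -/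
def initOp (ι : S → ℝ) (a : ℕ) : ((ℕ → S) → ℝ) →ₗ[ℝ] ((ℕ → S) → ℝ) where
  toFun g ω := ∑ y, ι y * g (update ω a y)
  map_add' f g := by ext ω; simp [mul_add, Finset.sum_add_distrib]
  map_smul' c f := by ext ω; simp [Finset.mul_sum, mul_left_comm]

/-- The composition `stepOp P a ∘ ⋯ ∘ stepOp P (a + m - 1)`: given the coordinates up to `a`, the
coordinates `a + 1, …, a + m` are sampled as a Markov chain and averaged out. -/
def seqOp (P : Matrix S S ℝ) (a : ℕ) : ℕ → ((ℕ → S) → ℝ) →ₗ[ℝ] ((ℕ → S) → ℝ)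
  | 0 => LinearMap.id
  | m + 1 => seqOp P a m ∘ₗ stepOp P (a + m)

variable (P : Matrix S S ℝ)

theorem stepOp_apply (a : ℕ) (g : (ℕ → S) → ℝ) (ω : ℕ → S) :
    stepOp P a g ω = ∑ y, P (ω a) y * g (update ω (a + 1) y) := rfl

theorem initOp_apply (ι : S → ℝ) (a : ℕ) (g : (ℕ → S) → ℝ) (ω : ℕ → S) :
    initOp ι a g ω = ∑ y, ι y * g (update ω a y) := rfl

@[simp] theorem seqOp_zero (a : ℕ) (g : (ℕ → S) → ℝ) : seqOp P a 0 g = g := rfl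

theorem seqOp_succ (a m : ℕ) (g : (ℕ → S) → ℝ) :
    seqOp P a (m + 1) g = seqOp P a m (stepOp P (a + m) g) := rfl

theorem seqOp_add (a m k : ℕ) (g : (ℕ → S) → ℝ) :
    seqOp P a (m + k) g = seqOp P a m (seqOp P (a + m) k g) := by
  induction k generalizing g with
  | zero => rfl
  | succ k ih => rw [← add_assoc, seqOp_succ, ih, seqOp_succ, add_assoc]

theorem seqOp_one (a : ℕ) (g : (ℕ → S) → ℝ) : seqOp P a 1 g = stepOp P a g := rfl

theorem stepOp_mul (a : ℕ) {f : (ℕ → S) → ℝ} (hf : IndepCoord f (a + 1)) (g : (ℕ → S) → ℝ) :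
    stepOp P a (f * g) = f * stepOp P a g := by
  ext ω
  simp only [stepOp_apply, Pi.mul_apply, Finset.mul_sum, hf ω _]
  exact Finset.sum_congr rfl fun y _ => by ring

theorem seqOp_mul (a m : ℕ) {f : (ℕ → S) → ℝ} (hf : ∀ c, a < c → IndepCoord f c)
    (g : (ℕ → S) → ℝ) : seqOp P a m (f * g) = f * seqOp P a m g := by
  induction m generalizing g with
  | zero => rfl
  | succ m ih => rw [seqOp_succ, stepOp_mul P _ (hf _ (by omega)), ih, seqOp_succ]

theorem stepOp_indep (a c : ℕ) (hc : c ≠ a) {g : (ℕ → S) → ℝ} (hg : IndepCoord g c) :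
    IndepCoord (stepOp P a g) c := by
  intro ω y
  simp only [stepOp_apply, update_of_ne hc.symm]
  refine Finset.sum_congr rfl fun z _ => ?_
  by_cases h : c = a + 1
  · subst h; rw [update_idem]
  · rw [update_comm h, hg]

theorem seqOp_indep (a m c : ℕ) (hc : c < a) {g : (ℕ → S) → ℝ} (hg : IndepCoord g c) :
    IndepCoord (seqOp P a m g) c := by
  induction m generalizing g with
  | zero => exact hg
  | succ m ih => rw [seqOp_succ]; exact ih (stepOp_indep P _ _ (by omega) hg)

variable {P}

theorem stepOp_of_indep (hP : ∀ x, ∑ y, P x y = 1) (a : ℕ) {g : (ℕ → S) → ℝ}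
    (hg : IndepCoord g (a + 1)) : stepOp P a g = g := by
  ext ω
  simp only [stepOp_apply, hg ω _, ← Finset.sum_mul, hP, one_mul]

theorem seqOp_of_indep (hP : ∀ x, ∑ y, P x y = 1) (a m : ℕ) {g : (ℕ → S) → ℝ}
    (hg : ∀ c, a < c → IndepCoord g c) : seqOp P a m g = g := by
  induction m with
  | zero => rfl
  | succ m ih => rw [seqOp_succ, stepOp_of_indep hP _ (hg _ (by omega)), ih]

theorem stepOp_nonneg (hP0 : ∀ x y, 0 ≤ P x y) (a : ℕ) {g : (ℕ → S) → ℝ} (hg : ∀ ω, 0 ≤ g ω)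
    (ω : ℕ → S) : 0 ≤ stepOp P a g ω :=
  Finset.sum_nonneg fun _ _ => mul_nonneg (hP0 _ _) (hg _)

theorem seqOp_nonneg (hP0 : ∀ x y, 0 ≤ P x y) (a m : ℕ) {g : (ℕ → S) → ℝ} (hg : ∀ ω, 0 ≤ g ω)
    (ω : ℕ → S) : 0 ≤ seqOp P a m g ω := by
  induction m generalizing g with
  | zero => exact hg ω
  | succ m ih => rw [seqOp_succ]; exact ih (stepOp_nonneg hP0 _ hg)

theorem seqOp_abs_le (hP0 : ∀ x y, 0 ≤ P x y) (hP : ∀ x, ∑ y, P x y = 1) (a m : ℕ)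
    {g : (ℕ → S) → ℝ} {C : ℝ} (hg : ∀ ω, |g ω| ≤ C) (ω : ℕ → S) : |seqOp P a m g ω| ≤ C := by
  have hc : seqOp P a m (fun _ => C) = fun _ => C := seqOp_of_indep hP a m fun _ _ _ _ => rfl
  have h1 := seqOp_nonneg hP0 a m (g := (fun _ => C) - g)
    (fun ω => by have := (abs_le.1 (hg ω)).2; simpa using this) ω
  have h2 := seqOp_nonneg hP0 a m (g := (fun _ => C) + g)
    (fun ω => by have := (abs_le.1 (hg ω)).1; simp only [Pi.add_apply]; linarith) ω
  rw [map_sub, hc, Pi.sub_apply] at h1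
  rw [map_add, hc, Pi.add_apply] at h2
  rw [abs_le]; constructor <;> linarith

theorem initOp_stepOp {ι : S → ℝ} (hι : ∀ y, ∑ x, ι x * P x y = ι y) (a : ℕ)
    {g : (ℕ → S) → ℝ} (hg : IndepCoord g a) : initOp ι a (stepOp P a g) = initOp ι (a + 1) g := by
  ext ω
  simp only [initOp_apply, stepOp_apply, update_self, Finset.mul_sum]
  rw [Finset.sum_comm]
  refine Finset.sum_congr rfl fun y _ => ?_
  rw [← hι y, Finset.sum_mul]
  refine Finset.sum_congr rfl fun x _ => ?_
  rw [update_comm (by omega), hg, mul_assoc]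

theorem initOp_seqOp {ι : S → ℝ} (hι : ∀ y, ∑ x, ι x * P x y = ι y) (a : ℕ)
    {g : (ℕ → S) → ℝ} (hg : ∀ c, c < a → IndepCoord g c) :
    initOp ι 0 (seqOp P 0 a g) = initOp ι a g := by
  induction a generalizing g with
  | zero => rfl
  | succ a ih =>
    rw [seqOp_succ, zero_add, ih (fun c hc => stepOp_indep P _ _ (by omega) (hg c (by omega))),
      initOp_stepOp hι a (hg a (by omega))]

/-- For a stationary chain, the expectation over times `0, …, N` of a function of the coordinates
`a, …, a + m` is the expectation over a stationary path on the times `a, …, a + m`. -/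
theorem localise {ι : S → ℝ} (hP : ∀ x, ∑ y, P x y = 1) (hι : ∀ y, ∑ x, ι x * P x y = ι y)
    (a m N : ℕ) (hN : a + m ≤ N)
    {g : (ℕ → S) → ℝ} (hg : ∀ c, (c < a ∨ a + m < c) → IndepCoord g c) :
    initOp ι 0 (seqOp P 0 N g) = initOp ι a (seqOp P a m g) := by
  obtain ⟨k, rfl⟩ := Nat.exists_eq_add_of_le hN
  rw [add_assoc, seqOp_add, seqOp_add, zero_add,
    seqOp_of_indep hP (a + m) k (fun c hc => hg c (Or.inr hc)),
    initOp_seqOp hι a (fun c hc => seqOp_indep P _ _ _ hc (hg c (Or.inl hc)))]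

/-- The explicit weighted sum over paths of length `m + 1` equals the operator expectation over the
time window `a, …, a + m`. -/
theorem path_sum (ι : S → ℝ) (a m : ℕ) (F : (Fin (m + 1) → S) → ℝ) (ω : ℕ → S) :
    ∑ x : Fin (m + 1) → S, (ι (x 0) * ∏ t : Fin m, P (x t.castSucc) (x t.succ)) * F x
      = initOp ι a (seqOp P a m fun ω => F fun i => ω (a + i)) ω := by
  induction m with
  | zero =>
    rw [seqOp_zero, initOp_apply]
    refine Fintype.sum_equiv (Equiv.funUnique (Fin 1) S) _ _ fun x => ?_
    simp only [Finset.univ_eq_empty, Finset.prod_empty, mul_one, Equiv.funUnique_apply]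
    congr 2
    ext i
    fin_cases i
    simp
  | succ m ih =>
    rw [seqOp_succ]
    have e := ih (fun x => ∑ y, P (x (Fin.last m)) y * F (Fin.snoc (α := fun _ => S) x y))
    have e2 : (fun ω : ℕ → S => ∑ y, P (ω (a + (Fin.last m : Fin (m + 1)))) y
          * F (Fin.snoc (α := fun _ => S) (fun i : Fin (m + 1) => ω (a + i)) y))
        = stepOp P (a + m) fun ω => F fun i => ω (a + i) := by
      ext ω
      rw [stepOp_apply]
      refine Finset.sum_congr rfl fun y _ => ?_
      congr 2
      ext i
      refine Fin.lastCases ?_ (fun i => ?_) i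
      · simp [add_assoc]
      · have : a + (i : ℕ) ≠ a + m + 1 := by have := i.2; omega
        simp [update_of_ne this]
    rw [← e2, ← e, ← (Fin.snocEquiv fun _ : Fin (m + 2) => S).sum_comp, Fintype.sum_prod_type,
      Finset.sum_comm]
    refine Finset.sum_congr rfl fun x _ => ?_
    rw [Finset.mul_sum]
    refine Finset.sum_congr rfl fun y _ => ?_
    have e0 : (Fin.snoc (α := fun _ => S) x y : Fin (m + 2) → S) 0 = x 0 := by
      rw [← Fin.castSucc_zero, Fin.snoc_castSucc]
    simp only [Fin.snocEquiv, Equiv.coe_fn_mk]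
    rw [Fin.prod_univ_castSucc, e0]
    simp only [Fin.snoc_castSucc, Fin.succ_last, Fin.snoc_last, Fin.succ_castSucc]
    ring

variable [DecidableEq S]

/-- If `G` ignores the intermediate coordinates, `m` steps act through the matrix power `P ^ m`. -/
theorem seqOp_eq_pow (a m : ℕ) {G : (ℕ → S) → ℝ}
    (hG : ∀ c, a < c → c < a + m → IndepCoord G c) (ω : ℕ → S) :
    seqOp P a m G ω = ∑ y, (P ^ m) (ω a) y * G (update ω (a + m) y) := by
  induction m generalizing ω G with
  | zero => simp [Matrix.one_apply]
  | succ m ih =>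
    rw [seqOp_succ, ih (fun c h1 h2 => stepOp_indep P _ _ (by omega) (hG c h1 (by omega)))]
    have key : ∀ z, (P ^ m) (ω a) z * stepOp P (a + m) G (update ω (a + m) z)
        = ∑ y, (P ^ m) (ω a) z * P z y * G (update ω (a + (m + 1)) y) := by
      intro z
      rw [stepOp_apply, Finset.mul_sum]
      refine Finset.sum_congr rfl fun y _ => ?_
      rw [update_self, add_assoc]
      rcases Nat.eq_zero_or_pos m with rfl | hm
      · by_cases hz : ω a = z
        · subst hz; simp
        · simp [Matrix.one_apply_ne hz]
      · rw [update_comm (by omega), hG (a + m) (by omega) (by omega), mul_assoc]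
    simp only [key]
    rw [Finset.sum_comm]
    refine Finset.sum_congr rfl fun y _ => ?_
    rw [pow_succ, Matrix.mul_apply, Finset.sum_mul]

end Chain

/-! ### Edge indicators along a stationary chain -/

section PathExp

variable {S : Type*} [Fintype S] {P : Matrix S S ℝ} {ι : S → ℝ}

/-- Expectation over a chain on the times `0, …, N` with initial distribution `ι`. The sequence `ω₀`
only fills the coordinates beyond `N`. -/
def pathExp (ι : S → ℝ) (P : Matrix S S ℝ) (N : ℕ) (ω₀ : ℕ → S) : ((ℕ → S) → ℝ) →ₗ[ℝ] ℝ :=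
  LinearMap.proj ω₀ ∘ₗ initOp ι 0 ∘ₗ seqOp P 0 N

theorem pathExp_apply (N : ℕ) (ω₀ : ℕ → S) (g : (ℕ → S) → ℝ) :
    pathExp ι P N ω₀ g = initOp ι 0 (seqOp P 0 N g) ω₀ := rfl

theorem pathExp_nonneg (hP0 : ∀ x y, 0 ≤ P x y) (hι0 : ∀ x, 0 ≤ ι x) (N : ℕ) (ω₀ : ℕ → S)
    (g : (ℕ → S) → ℝ) (hg : ∀ ω, 0 ≤ g ω) : 0 ≤ pathExp ι P N ω₀ g :=
  Finset.sum_nonneg fun _ _ => mul_nonneg (hι0 _) (seqOp_nonneg hP0 _ _ hg _)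

theorem pathExp_one (hP : ∀ x, ∑ y, P x y = 1) (hι1 : ∑ x, ι x = 1) (N : ℕ) (ω₀ : ℕ → S) :
    pathExp ι P N ω₀ (fun _ => 1) = 1 := by
  rw [pathExp_apply, seqOp_of_indep hP 0 N (fun _ _ _ _ => rfl), initOp_apply]
  simpa using hι1

end PathExp

theorem mixing_algebra {a c d u v ε : ℝ} (hu : 0 ≤ u) (hv : 0 ≤ v) (hε0 : 0 ≤ ε)
    (hε : ε ≤ 1 / 2) (ha : |a - u| ≤ ε * u) (hc : |c - v| ≤ ε * v) (hd : |d - v| ≤ ε * v) :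
    |u * d - a * c| ≤ 7 / 2 * ε * (u * v) := by
  have e : u * d - a * c = u * (d - v) - (a - u) * (c - v) - (a - u) * v - u * (c - v) := by ring
  have h1 : |u * (d - v)| ≤ ε * (u * v) := by
    rw [abs_mul, abs_of_nonneg hu]; nlinarith
  have h2 : |(a - u) * (c - v)| ≤ (ε * u) * (ε * v) := by
    rw [abs_mul]; exact mul_le_mul ha hc (abs_nonneg _) (by positivity)
  have h3 : |(a - u) * v| ≤ ε * (u * v) := by
    rw [abs_mul, abs_of_nonneg hv]; nlinarith
  have h4 : |u * (c - v)| ≤ ε * (u * v) := by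
    rw [abs_mul, abs_of_nonneg hu]; nlinarith
  have h5 : (ε * u) * (ε * v) ≤ 1 / 2 * ε * (u * v) := by
    have : 0 ≤ ε * (u * v) := by positivity
    nlinarith
  rw [e]
  have t1 := abs_sub (u * (d - v) - (a - u) * (c - v) - (a - u) * v) (u * (c - v))
  have t2 := abs_sub (u * (d - v) - (a - u) * (c - v)) ((a - u) * v)
  have t3 := abs_sub (u * (d - v)) ((a - u) * (c - v))
  linarith

section Chain2

variable {S : Type*} [DecidableEq S]

/-- Indicator that the edge `(i, j)` is traversed between the times `t` and `t + 1`. -/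
def hit (i j : S) (t : ℕ) (ω : ℕ → S) : ℕ := if ω t = i ∧ ω (t + 1) = j then 1 else 0

theorem hit_indep (i j : S) (t c : ℕ) (h1 : c ≠ t) (h2 : c ≠ t + 1) (ω : ℕ → S) (y : S) :
    hit i j t (update ω c y) = hit i j t ω := by
  simp only [hit, update_of_ne h1.symm, update_of_ne h2.symm]

/-- The indicator `hit` as a real-valued function. -/
def hitR (i j : S) (t : ℕ) : (ℕ → S) → ℝ := fun ω => (hit i j t ω : ℝ)

theorem hitR_apply (i j : S) (t : ℕ) (ω : ℕ → S) :
    hitR i j t ω = (if ω t = i then 1 else 0) * (if ω (t + 1) = j then 1 else 0) := by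
  simp only [hitR, hit, ite_and]
  split_ifs <;> simp

theorem hitR_indep (i j : S) (t c : ℕ) (h1 : c ≠ t) (h2 : c ≠ t + 1) :
    IndepCoord (hitR i j t) c := fun ω y => by simp only [hitR, hit_indep i j t c h1 h2 ω y]

variable [Fintype S] {P : Matrix S S ℝ} {ι : S → ℝ}

theorem pathExp_hit (hP : ∀ x, ∑ y, P x y = 1) (hι : ∀ y, ∑ x, ι x * P x y = ι y)
    (i j : S) (t N : ℕ) (hN : t + 1 ≤ N) (ω₀ : ℕ → S) :
    pathExp ι P N ω₀ (hitR i j t) = ι i * P i j := by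
  rw [pathExp_apply, localise hP hι t 1 N hN
    (fun c hc => hitR_indep i j t c (by omega) (by omega)), seqOp_one, initOp_apply]
  simp [stepOp_apply, hitR_apply]

theorem stepOp_hit (i j : S) (s : ℕ) (ω : ℕ → S) :
    stepOp P s (hitR i j s) ω = if ω s = i then P i j else 0 := by
  simp only [stepOp_apply, hitR_apply]
  by_cases h : ω s = i <;> simp [h]

theorem pathExp_hit_hit (hP : ∀ x, ∑ y, P x y = 1) (hι : ∀ y, ∑ x, ι x * P x y = ι y)
    (i j : S) (t d N : ℕ) (hN : t + 1 + d + 1 ≤ N) (ω₀ : ℕ → S) :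
    pathExp ι P N ω₀ (hitR i j t * hitR i j (t + 1 + d))
      = ι i * P i j * (P ^ d) j i * P i j := by
  rw [pathExp_apply, localise hP hι t (1 + (d + 1)) N (by omega)
    (fun c hc => (hitR_indep i j t c (by omega) (by omega)).mul
      (hitR_indep i j (t + 1 + d) c (by omega) (by omega))),
    seqOp_add, seqOp_one,
    seqOp_mul P (t + 1) (d + 1) (fun c hc => hitR_indep i j t c (by omega) (by omega)),
    seqOp_succ]
  have e : seqOp P (t + 1) d (stepOp P (t + 1 + d) (hitR i j (t + 1 + d)))
      = fun ω => (P ^ d) (ω (t + 1)) i * P i j := by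
    ext ω
    rw [seqOp_eq_pow (t + 1) d (fun c h1 h2 => stepOp_indep P _ _ (by omega)
      (hitR_indep i j _ c (by omega) (by omega)))]
    simp [stepOp_hit]
  rw [e, initOp_apply]
  simp only [stepOp_apply, Pi.mul_apply, hitR_apply]
  simp [mul_assoc]

/-- Starting at time `s`, the chain must reach `i` in `r` steps, traverse `(i, j)`, and go on for `r`
steps; between these times `G` only sees the endpoints. -/
theorem seqOp_decouple (i j : S) (s r : ℕ) {G : (ℕ → S) → ℝ}
    (hG : ∀ c, s < c → c < s + r + 1 + r → IndepCoord G c) (ω : ℕ → S) :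
    seqOp P s (r + 1 + r) (hitR i j (s + r) * G) ω
      = ∑ y, (P ^ r) (ω s) i * P i j * (P ^ r) j y * G (update ω (s + r + 1 + r) y) := by
  set H : (ℕ → S) → ℝ := fun ω => ∑ y, (P ^ r) j y * G (update ω (s + r + 1 + r) y) with hH
  have hHi : ∀ c, s < c → c < s + r + 1 + r → IndepCoord H c := by
    intro c h1 h2 ω y
    simp only [hH]
    refine Finset.sum_congr rfl fun z _ => ?_
    rw [update_comm (by omega), hG c h1 h2]
  have e1 : seqOp P (s + r + 1) r (hitR i j (s + r) * G) = hitR i j (s + r) * H := by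
    rw [seqOp_mul P _ _ (fun c hc => hitR_indep i j _ c (by omega) (by omega))]
    ext ω
    simp only [Pi.mul_apply, seqOp_eq_pow (s + r + 1) r (fun c h1 h2 => hG c (by omega) (by omega)),
      hitR_apply, hH]
    by_cases h : ω (s + r + 1) = j <;> simp [h]
  have e2 : stepOp P (s + r) (hitR i j (s + r) * H)
      = fun ω => (if ω (s + r) = i then 1 else 0) * (P i j * H ω) := by
    ext ω
    by_cases hr : r = 0
    · subst hr
      simp only [stepOp_apply, Pi.mul_apply, hitR_apply, hH]
      by_cases h : ω s = i <;> simp [h]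
    · simp only [stepOp_apply, Pi.mul_apply, hHi (s + r + 1) (by omega) (by omega) ω _, hitR_apply]
      by_cases h : ω (s + r) = i <;> simp [h]
  rw [show r + 1 + r = r + (1 + r) by ring, seqOp_add, seqOp_add, seqOp_one, e1, e2,
    seqOp_eq_pow s r]
  · have : ∀ y, (P ^ r) (ω s) y * ((if update ω (s + r) y (s + r) = i then 1 else 0)
        * (P i j * H (update ω (s + r) y)))
        = if y = i then (P ^ r) (ω s) i * (P i j * H ω) else 0 := by
      intro y
      by_cases h : y = i
      · subst h
        rcases Nat.eq_zero_or_pos r with rfl | hr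
        · by_cases hz : ω s = y
          · subst hz; simp
          · simp [Matrix.one_apply_ne hz]
        · simp [hHi (s + r) (by omega) (by omega) ω y]
      · simp [h]
    rw [Finset.sum_congr rfl fun y _ => this y, Finset.sum_ite_eq', if_pos (Finset.mem_univ _)]
    simp only [hH, Finset.mul_sum]
    exact Finset.sum_congr rfl fun y _ => by ring
  · intro c h1 h2 ω y
    simp only [hHi c h1 (by omega) ω y, update_of_ne (show s + r ≠ c by omega)]

/-- If `g` ignores the times strictly between `t - r₀` and `t + 1 + r₀`, then the indicator of a
traversal at time `t` is almost uncorrelated with `g`. -/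
theorem pathExp_decouple (hP0 : ∀ x y, 0 ≤ P x y) (hP : ∀ x, ∑ y, P x y = 1)
    (hι0 : ∀ x, 0 ≤ ι x) (hι1 : ∑ x, ι x = 1)
    {ε : ℝ} (hε0 : 0 ≤ ε) (hε : ε ≤ 1 / 2) {r₀ : ℕ}
    (hmix : ∀ r, r₀ ≤ r → ∀ x y, |(P ^ r) x y - ι y| ≤ ε * ι y)
    (i j : S) (t N : ℕ) (ht : r₀ ≤ t) (hN : t + 1 + r₀ ≤ N) (ω₀ : ℕ → S)
    {g : (ℕ → S) → ℝ} {C : ℝ} (hgC : ∀ ω, |g ω| ≤ C)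
    (hg : ∀ c, t - r₀ < c → c < t + 1 + r₀ → IndepCoord g c) :
    pathExp ι P N ω₀ (((fun _ => ι i * P i j) - hitR i j t) * g)
      ≤ 7 / 2 * ε * (ι i * P i j) * C := by
  obtain ⟨s, rfl⟩ : ∃ s, t = s + r₀ := ⟨t - r₀, by omega⟩
  obtain ⟨k, rfl⟩ := Nat.exists_eq_add_of_le hN
  rw [Nat.add_sub_cancel] at hg
  have hq0 : 0 ≤ ι i * P i j := mul_nonneg (hι0 i) (hP0 i j)
  set u := s + r₀ + 1 + r₀ with hu
  set G := seqOp P u k g with hGdef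
  have hG : ∀ c, s < c → c < u → IndepCoord G c := fun c h1 h2 =>
    seqOp_indep P _ _ _ h2 (hg c h1 h2)
  have hGC : ∀ ω, |G ω| ≤ C := seqOp_abs_le hP0 hP _ _ hgC
  have key : ∀ ω, |seqOp P s (r₀ + 1 + r₀) (((fun _ => ι i * P i j) - hitR i j (s + r₀)) * G) ω|
      ≤ 7 / 2 * ε * (ι i * P i j) * C := by
    intro ω
    rw [sub_mul, map_sub, Pi.sub_apply, seqOp_decouple i j s r₀ hG,
      seqOp_mul P _ _ (f := fun _ => ι i * P i j) (fun _ _ _ _ => rfl), Pi.mul_apply,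
      seqOp_eq_pow s (r₀ + 1 + r₀) (fun c h1 h2 => hG c h1 (by omega)),
      show s + (r₀ + 1 + r₀) = u by omega, Finset.mul_sum, ← Finset.sum_sub_distrib]
    refine (Finset.abs_sum_le_sum_abs _ _).trans ?_
    have : ∀ y ∈ Finset.univ, |ι i * P i j * ((P ^ (r₀ + 1 + r₀)) (ω s) y * G (update ω u y))
        - (P ^ r₀) (ω s) i * P i j * (P ^ r₀) j y * G (update ω u y)|
        ≤ 7 / 2 * ε * (ι i * P i j) * C * ι y := by
      intro y _
      have hm := mixing_algebra (hι0 i) (hι0 y) hε0 hε (hmix r₀ le_rfl (ω s) i)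
        (hmix r₀ le_rfl j y) (hmix (r₀ + 1 + r₀) (by omega) (ω s) y)
      have e : ι i * P i j * ((P ^ (r₀ + 1 + r₀)) (ω s) y * G (update ω u y))
        - (P ^ r₀) (ω s) i * P i j * (P ^ r₀) j y * G (update ω u y)
        = P i j * (ι i * (P ^ (r₀ + 1 + r₀)) (ω s) y - (P ^ r₀) (ω s) i * (P ^ r₀) j y)
          * G (update ω u y) := by ring
      rw [e, abs_mul, abs_mul, abs_of_nonneg (hP0 i j)]
      calc _ ≤ P i j * (7 / 2 * ε * (ι i * ι y)) * C := by
            have := hι0 i; have := hι0 y; have := hP0 i j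
            exact mul_le_mul (mul_le_mul_of_nonneg_left hm (hP0 i j)) (hGC _) (abs_nonneg _)
              (by positivity)
        _ = _ := by ring
    refine (Finset.sum_le_sum this).trans ?_
    rw [← Finset.mul_sum, hι1, mul_one]
  have e : seqOp P 0 (u + k) (((fun _ => ι i * P i j) - hitR i j (s + r₀)) * g)
      = seqOp P 0 s (seqOp P s (r₀ + 1 + r₀)
          (((fun _ => ι i * P i j) - hitR i j (s + r₀)) * G)) := by
    rw [seqOp_add, zero_add, seqOp_mul P u k, show u = s + (r₀ + 1 + r₀) by omega, seqOp_add,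
      zero_add, show s + (r₀ + 1 + r₀) = u by omega]
    intro c hc ω y
    simp only [Pi.sub_apply, hitR_indep i j (s + r₀) c (by omega) (by omega) ω y]
  rw [pathExp_apply, e, initOp_apply]
  calc _ ≤ ∑ y, ι y * (7 / 2 * ε * (ι i * P i j) * C) :=
        Finset.sum_le_sum fun y _ => mul_le_mul_of_nonneg_left
          ((le_abs_self _).trans (seqOp_abs_le hP0 hP _ _ key _)) (hι0 y)
    _ = _ := by rw [← Finset.sum_mul, hι1, one_mul]

end Chain2

/-! ### The Chen–Stein inequality -/

section ChenStein

variable {Ω : Type*}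

theorem lip_of_diff {f : ℕ → ℝ} (h : ∀ k, 1 ≤ k → |f (k + 1) - f k| ≤ 1) (b d : ℕ) :
    |f (b + d + 1) - f (b + 1)| ≤ d := by
  induction d with
  | zero => simp
  | succ d ih =>
    have := h (b + d + 1) (by omega)
    have t := abs_sub_le (f (b + (d + 1) + 1)) (f (b + d + 1)) (f (b + 1))
    rw [← add_assoc] at t ⊢
    push_cast
    linarith

/-- Chen–Stein bound with dependency neighbourhoods `nb t`, for a positive linear functional `E` and
`{0, 1}`-valued `X t`. It holds pointwise before `E` is applied: with `V` the sum of the `X s` for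
`s ∉ {t} ∪ nb t`, both `f (W + 1)` and, where `X t = 1`, `f W` are compared with `f (V + 1)`. -/
theorem chen_stein (E : (Ω → ℝ) →ₗ[ℝ] ℝ) (hpos : ∀ g, (∀ ω, 0 ≤ g ω) → 0 ≤ E g)
    (T : Finset ℕ) (X : ℕ → Ω → ℕ) (hX : ∀ t ω, X t ω = 0 ∨ X t ω = 1) {q : ℝ} (hq : 0 ≤ q)
    (nb : ℕ → Finset ℕ) (hnb : ∀ t ∈ T, nb t ⊆ T.erase t)
    {f : ℕ → ℝ} (hf : ∀ k, 1 ≤ k → |f (k + 1) - f k| ≤ 1) :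
    E (fun ω => (T.card * q) * f (∑ t ∈ T, X t ω + 1)
        - ((∑ t ∈ T, X t ω : ℕ) : ℝ) * f (∑ t ∈ T, X t ω))
      ≤ ∑ t ∈ T, (q * (E (fun ω => (X t ω : ℝ)) + ∑ s ∈ nb t, E (fun ω => (X s ω : ℝ)))
          + E (((fun _ => q) - fun ω => (X t ω : ℝ))
              * fun ω => f (∑ s ∈ (T.erase t) \ nb t, X s ω + 1))
          + ∑ s ∈ nb t, E ((fun ω => (X t ω : ℝ)) * fun ω => (X s ω : ℝ))) := by
  have mono : ∀ g h : Ω → ℝ, (∀ ω, g ω ≤ h ω) → E g ≤ E h := by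
    intro g h hgh
    have := hpos (h - g) (fun ω => by simpa using hgh ω)
    rw [map_sub] at this; linarith
  have eR : ∑ t ∈ T, (q * (E (fun ω => (X t ω : ℝ)) + ∑ s ∈ nb t, E (fun ω => (X s ω : ℝ)))
          + E (((fun _ => q) - fun ω => (X t ω : ℝ))
              * fun ω => f (∑ s ∈ (T.erase t) \ nb t, X s ω + 1))
          + ∑ s ∈ nb t, E ((fun ω => (X t ω : ℝ)) * fun ω => (X s ω : ℝ)))
      = E (∑ t ∈ T, (q • ((fun ω => (X t ω : ℝ)) + ∑ s ∈ nb t, fun ω => (X s ω : ℝ))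
          + ((fun _ => q) - fun ω => (X t ω : ℝ))
              * (fun ω => f (∑ s ∈ (T.erase t) \ nb t, X s ω + 1))
          + ∑ s ∈ nb t, (fun ω => (X t ω : ℝ)) * fun ω => (X s ω : ℝ))) := by
    simp only [map_sum, map_add, map_smul, smul_eq_mul]
  rw [eR]
  refine mono _ _ fun ω => ?_
  simp only [Finset.sum_apply, Pi.add_apply, Pi.smul_apply, Pi.mul_apply, Pi.sub_apply, smul_eq_mul]
  set W := ∑ t ∈ T, X t ω with hW
  have e : (T.card * q) * f (W + 1) - (W : ℝ) * f W
      = ∑ t ∈ T, (q * f (W + 1) - (X t ω : ℝ) * f W) := by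
    rw [Finset.sum_sub_distrib, Finset.sum_const, nsmul_eq_mul, ← Finset.sum_mul, hW]
    push_cast; ring
  rw [e]
  refine Finset.sum_le_sum fun t ht => ?_
  set V := ∑ s ∈ (T.erase t) \ nb t, X s ω with hV
  set Z := ∑ s ∈ nb t, X s ω with hZ
  have hWs : W = V + Z + X t ω := by
    rw [hW, ← Finset.sum_erase_add _ _ ht, hV, hZ, Finset.sum_sdiff (hnb t ht)]
  have hZR : ∑ s ∈ nb t, (X s ω : ℝ) = Z := by rw [hZ]; push_cast; rfl
  rw [← Finset.mul_sum, hZR]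
  have l1 := lip_of_diff hf V (Z + X t ω)
  have l2 := lip_of_diff hf V Z
  rw [← add_assoc, ← hWs] at l1
  push_cast at l1
  have m1 := mul_le_mul_of_nonneg_left (abs_le.1 l1).2 hq
  rcases hX t ω with h0 | h0
  · simp only [h0, Nat.cast_zero] at m1 ⊢
    linarith
  · have : f W = f (V + Z + 1) := by rw [hWs, h0]
    simp only [h0, Nat.cast_one] at m1 ⊢
    rw [this]
    linarith [(abs_le.1 l2).1]

/-- The total variation distance is attained on the set where `p` exceeds `Q`, which is finite because
`p` is supported on `{0, …, M}`. -/
theorem tv_eq (p Q : ℕ → ℝ) (M : ℕ) (hp : ∀ k, M < k → p k = 0)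
    (hp1 : ∑ k ∈ Finset.range (M + 1), p k = 1) (hQ0 : ∀ k, 0 ≤ Q k) (hQ : HasSum Q 1) :
    (1 / 2) * ∑' k, |p k - Q k|
      = ∑ k ∈ (Finset.range (M + 1)).filter (fun k => Q k < p k), (p k - Q k) := by
  have hps : HasSum p 1 := by
    rw [← hp1]
    exact hasSum_sum_of_ne_finset_zero fun k hk => hp k (by simpa [Nat.lt_succ_iff] using hk)
  have hd : HasSum (fun k => p k - Q k) 0 := by simpa using hps.sub hQ
  have hm : HasSum (fun k => max (p k - Q k) 0)
      (∑ k ∈ (Finset.range (M + 1)).filter (fun k => Q k < p k), (p k - Q k)) := by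
    have h2 : ∑ k ∈ (Finset.range (M + 1)).filter (fun k => Q k < p k), (p k - Q k)
        = ∑ k ∈ Finset.range (M + 1), max (p k - Q k) 0 := by
      rw [Finset.sum_filter]
      refine Finset.sum_congr rfl fun k _ => ?_
      split_ifs with h
      · rw [max_eq_left (by linarith)]
      · rw [max_eq_right (by linarith)]
    rw [h2]
    refine hasSum_sum_of_ne_finset_zero fun k hk => ?_
    rw [hp k (by simpa [Nat.lt_succ_iff] using hk)]
    exact max_eq_right (by linarith [hQ0 k])
  have h := (hm.mul_left 2).sub hd
  have e : (fun k => |p k - Q k|) = fun k => 2 * max (p k - Q k) 0 - (p k - Q k) := by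
    ext k
    rcases le_total 0 (p k - Q k) with h | h
    · rw [abs_of_nonneg h, max_eq_left h]; ring
    · rw [abs_of_nonpos h, max_eq_right h]; ring
  rw [e, h.tsum_eq]; ring

end ChenStein

/-! ### Total variation bound for a stationary chain -/

/-- Among the neighbours of `t` at distance at most `r`, two are adjacent to `t` and `2 (r - 1)` are
not. -/
theorem sum_neighbours_le {F : ℕ → ℝ} {t r : ℕ} (ht : r ≤ t) (hr : 1 ≤ r) {B B' : ℝ} (hB : 0 ≤ B)
    (hB' : 0 ≤ B') {nb : Finset ℕ} (hnb : nb ⊆ (Finset.Icc (t - r) (t + r)).erase t)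
    (h1 : ∀ s ∈ nb, (s = t + 1 ∨ t = s + 1) → F s ≤ B')
    (h2 : ∀ s ∈ nb, ¬ (s = t + 1 ∨ t = s + 1) → F s ≤ B) :
    ∑ s ∈ nb, F s ≤ 2 * B' + 2 * (r - 1) * B := by
  classical
  rw [← Finset.sum_filter_add_sum_filter_not nb (fun s => s = t + 1 ∨ t = s + 1)]
  have c1 : ((nb.filter fun s => s = t + 1 ∨ t = s + 1).card : ℝ) ≤ 2 := by
    have : (nb.filter fun s => s = t + 1 ∨ t = s + 1) ⊆ {t + 1, t - 1} := by
      intro s hs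
      simp only [Finset.mem_filter, Finset.mem_insert, Finset.mem_singleton] at hs ⊢
      omega
    exact_mod_cast (Finset.card_le_card this).trans Finset.card_le_two
  have c2 : ((nb.filter fun s => ¬ (s = t + 1 ∨ t = s + 1)).card : ℝ) ≤ 2 * (r - 1) := by
    have : (nb.filter fun s => ¬ (s = t + 1 ∨ t = s + 1))
        ⊆ Finset.Ico (t - r) (t - 1) ∪ Finset.Ioc (t + 1) (t + r) := by
      intro s hs
      rw [Finset.mem_filter] at hs
      have h := hnb hs.1
      have := hs.2
      simp only [Finset.mem_erase, Finset.mem_Icc, Finset.mem_union, Finset.mem_Ico,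
        Finset.mem_Ioc] at h ⊢
      omega
    have h := (Finset.card_le_card this).trans (Finset.card_union_le _ _)
    rw [Nat.card_Ico, Nat.card_Ioc] at h
    have h3 : (nb.filter fun s => ¬ (s = t + 1 ∨ t = s + 1)).card + 2 ≤ 2 * r := by omega
    have h4 : ((nb.filter fun s => ¬ (s = t + 1 ∨ t = s + 1)).card : ℝ) + 2 ≤ 2 * r := by
      exact_mod_cast h3
    linarith
  refine add_le_add ?_ ?_
  · refine (Finset.sum_le_card_nsmul _ _ B' fun s hs => ?_).trans ?_
    · rw [Finset.mem_filter] at hs; exact h1 s hs.1 hs.2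
    · rw [nsmul_eq_mul]; exact mul_le_mul_of_nonneg_right c1 hB'
  · refine (Finset.sum_le_card_nsmul _ _ B fun s hs => ?_).trans ?_
    · rw [Finset.mem_filter] at hs; exact h2 s hs.1 hs.2
    · rw [nsmul_eq_mul]; exact mul_le_mul_of_nonneg_right c2 hB

section Assembly

variable {S : Type*} [DecidableEq S]

/-- Number of traversals of `(i, j)` in the `m` steps of the time window `a, …, a + m`. -/
def windowCount (i j : S) (a m : ℕ) (ω : ℕ → S) : ℕ := ∑ t ∈ Finset.Ico a (a + m), hit i j t ω

theorem windowCount_le (i j : S) (a m : ℕ) (ω : ℕ → S) : windowCount i j a m ω ≤ m := by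
  unfold windowCount
  refine (Finset.sum_le_card_nsmul _ _ 1 fun t _ => ?_).trans (by simp)
  unfold hit; split_ifs <;> simp

variable [Fintype S] {P : Matrix S S ℝ} {ι : S → ℝ}

/-- The Chen–Stein bound for edge traversals of a stationary chain, with neighbourhoods of radius `r₀`.
`B'` bounds `E[I_t I_s]` for adjacent times, `B` for the others. -/
theorem chain_stein (hP0 : ∀ x y, 0 ≤ P x y) (hP : ∀ x, ∑ y, P x y = 1)
    (hι0 : ∀ x, 0 ≤ ι x) (hι1 : ∑ x, ι x = 1) (hι : ∀ y, ∑ x, ι x * P x y = ι y)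
    {ε : ℝ} (hε0 : 0 ≤ ε) (hε : ε ≤ 1 / 2) {r₀ : ℕ} (hr₀ : 1 ≤ r₀)
    (hmix : ∀ r, r₀ ≤ r → ∀ x y, |(P ^ r) x y - ι y| ≤ ε * ι y)
    (i j : S) {B B' : ℝ} (hB0 : 0 ≤ B) (hB0' : 0 ≤ B')
    (hB' : ι i * P i j * (P ^ 0) j i * P i j ≤ B')
    (hB : ∀ d, 1 ≤ d → ι i * P i j * (P ^ d) j i * P i j ≤ B)
    (ℓ : ℕ) (ω₀ : ℕ → S) {f : ℕ → ℝ} (hf : ∀ k, 1 ≤ k → |f (k + 1) - f k| ≤ 1)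
    (hf3 : ∀ k, 1 ≤ k → |f k| ≤ 3) :
    pathExp ι P (r₀ + ℓ + r₀) ω₀ (fun ω => (ℓ * (ι i * P i j)) * f (windowCount i j r₀ ℓ ω + 1)
        - (windowCount i j r₀ ℓ ω : ℝ) * f (windowCount i j r₀ ℓ ω))
      ≤ ℓ * ((2 * r₀ + 1) * (ι i * P i j) ^ 2 + 2 * B' + 2 * (r₀ - 1) * B
          + 12 * ε * (ι i * P i j)) := by
  have hq0 : 0 ≤ ι i * P i j := mul_nonneg (hι0 i) (hP0 i j)
  set q := ι i * P i j with hq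
  set T := Finset.Ico r₀ (r₀ + ℓ) with hT
  have hTc : T.card = ℓ := by simp [hT]
  set nb : ℕ → Finset ℕ := fun t => T ∩ (Finset.Icc (t - r₀) (t + r₀)).erase t with hnb
  have cs := chen_stein (pathExp ι P (r₀ + ℓ + r₀) ω₀) (pathExp_nonneg hP0 hι0 _ _) T (hit i j)
    (fun t ω => by unfold hit; split_ifs <;> simp) hq0 nb
    (fun t _ s hs => by
      simp only [hnb, Finset.mem_inter, Finset.mem_erase] at hs ⊢
      exact ⟨hs.2.1, hs.1⟩) hf
  rw [hTc] at cs
  refine cs.trans ?_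
  have hsum : ∀ X : ℝ, (ℓ : ℝ) * X = ∑ t ∈ T, X := by
    intro X; rw [Finset.sum_const, hTc, nsmul_eq_mul]
  rw [hsum]
  refine Finset.sum_le_sum fun t ht => ?_
  have htT := Finset.mem_Ico.1 ht
  have m1 : ∀ s ∈ T, pathExp ι P (r₀ + ℓ + r₀) ω₀ (fun ω => (hit i j s ω : ℝ)) = q := by
    intro s hs
    have := Finset.mem_Ico.1 hs
    exact pathExp_hit hP hι i j s _ (by omega) ω₀
  have m2 : ∀ s d, s + 1 + d ∈ T → pathExp ι P (r₀ + ℓ + r₀) ω₀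
      (hitR i j s * hitR i j (s + 1 + d)) = q * (P ^ d) j i * P i j := by
    intro s d hs
    have := Finset.mem_Ico.1 hs
    exact pathExp_hit_hit hP hι i j s d _ (by omega) ω₀
  have nbsub : nb t ⊆ (Finset.Icc (t - r₀) (t + r₀)).erase t := Finset.inter_subset_right
  have p1 : q * (pathExp ι P (r₀ + ℓ + r₀) ω₀ (fun ω => (hit i j t ω : ℝ))
      + ∑ s ∈ nb t, pathExp ι P (r₀ + ℓ + r₀) ω₀ (fun ω => (hit i j s ω : ℝ)))
      ≤ (2 * r₀ + 1) * q ^ 2 := by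
    rw [m1 t ht, Finset.sum_congr rfl fun s hs => m1 s (Finset.mem_inter.1 hs).1, Finset.sum_const,
      nsmul_eq_mul]
    have hc : (nb t).card + 1 ≤ 2 * r₀ + 1 := by
      have h := Finset.card_le_card nbsub
      rw [Finset.card_erase_of_mem (by simp), Nat.card_Icc] at h
      omega
    have hc' : ((nb t).card : ℝ) + 1 ≤ 2 * r₀ + 1 := by exact_mod_cast hc
    have := mul_le_mul_of_nonneg_right hc' (sq_nonneg q)
    nlinarith
  have p2 : ∑ s ∈ nb t, pathExp ι P (r₀ + ℓ + r₀) ω₀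
      ((fun ω => (hit i j t ω : ℝ)) * fun ω => (hit i j s ω : ℝ))
      ≤ 2 * B' + 2 * (r₀ - 1) * B := by
    have sym : ∀ s ∈ nb t, ∃ d, (d = 0 ↔ (s = t + 1 ∨ t = s + 1)) ∧
        pathExp ι P (r₀ + ℓ + r₀) ω₀ ((fun ω => (hit i j t ω : ℝ)) * fun ω => (hit i j s ω : ℝ))
          = q * (P ^ d) j i * P i j := by
      intro s hs
      have hst : s ≠ t := by have := nbsub hs; simp only [Finset.mem_erase] at this; exact this.1
      have hsT := (Finset.mem_inter.1 hs).1
      rcases lt_or_gt_of_ne hst with h | h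
      · obtain ⟨d, rfl⟩ : ∃ d, t = s + 1 + d := ⟨t - s - 1, by omega⟩
        refine ⟨d, by omega, ?_⟩
        rw [mul_comm]; exact m2 s d ht
      · obtain ⟨d, rfl⟩ : ∃ d, s = t + 1 + d := ⟨s - t - 1, by omega⟩
        exact ⟨d, by omega, m2 t d hsT⟩
    refine sum_neighbours_le htT.1 hr₀ hB0 hB0' nbsub (fun s hs h => ?_) (fun s hs h => ?_)
    · obtain ⟨d, hd, e⟩ := sym s hs
      rw [e, hd.2 h]; exact hB'
    · obtain ⟨d, hd, e⟩ := sym s hs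
      rw [e]; exact hB d (Nat.one_le_iff_ne_zero.2 fun h0 => h (hd.1 h0))
  have p3 : pathExp ι P (r₀ + ℓ + r₀) ω₀ (((fun _ => q) - fun ω => (hit i j t ω : ℝ))
        * fun ω => f (∑ s ∈ (T.erase t) \ nb t, hit i j s ω + 1)) ≤ 12 * ε * q := by
    refine (pathExp_decouple hP0 hP hι0 hι1 hε0 hε hmix i j t _ htT.1 (by omega) ω₀ (C := 3)
      (fun ω => hf3 _ (by omega)) ?_).trans ?_
    · intro c h1 h2 ω y
      dsimp only
      congr 2
      refine Finset.sum_congr rfl fun s hs => ?_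
      simp only [hnb, Finset.mem_sdiff, Finset.mem_erase, Finset.mem_inter, Finset.mem_Icc] at hs
      have hs2 : ¬ (t - r₀ ≤ s ∧ s ≤ t + r₀) := fun h => hs.2 ⟨hs.1.2, hs.1.1, h⟩
      exact hit_indep i j s c (by omega) (by omega) ω y
    · have : 0 ≤ ε * q := mul_nonneg hε0 hq0
      nlinarith
  linarith

/-- Total variation bound between the number of traversals of `(i, j)` in `ℓ` steps of a stationary
chain and a Poisson variable with the same mean. -/
theorem chain_tv (hP0 : ∀ x y, 0 ≤ P x y) (hP : ∀ x, ∑ y, P x y = 1)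
    (hι0 : ∀ x, 0 ≤ ι x) (hι1 : ∑ x, ι x = 1) (hι : ∀ y, ∑ x, ι x * P x y = ι y)
    {ε : ℝ} (hε0 : 0 ≤ ε) (hε : ε ≤ 1 / 2) {r₀ : ℕ} (hr₀ : 1 ≤ r₀)
    (hmix : ∀ r, r₀ ≤ r → ∀ x y, |(P ^ r) x y - ι y| ≤ ε * ι y)
    (i j : S) {B B' : ℝ} (hB0 : 0 ≤ B) (hB0' : 0 ≤ B')
    (hB' : ι i * P i j * (P ^ 0) j i * P i j ≤ B')
    (hB : ∀ d, 1 ≤ d → ι i * P i j * (P ^ d) j i * P i j ≤ B)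
    (ℓ : ℕ) (ω₀ : ℕ → S) :
    (1 / 2) * ∑' k : ℕ, |pathExp ι P (r₀ + ℓ + r₀) ω₀
          (fun ω => if windowCount i j r₀ ℓ ω = k then 1 else 0)
        - _root_.poissonPMF (ℓ * (ι i * P i j)) k|
      ≤ ℓ * ((2 * r₀ + 1) * (ι i * P i j) ^ 2 + 2 * B' + 2 * (r₀ - 1) * B
          + 12 * ε * (ι i * P i j)) := by
  have hq0 : 0 ≤ ι i * P i j := mul_nonneg (hι0 i) (hP0 i j)
  set E := pathExp ι P (r₀ + ℓ + r₀) ω₀ with hE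
  set W := windowCount i j r₀ ℓ with hW
  set r : ℝ := ℓ * (ι i * P i j) with hr
  have hr0 : 0 ≤ r := by positivity
  have Esum : ∀ A : Finset ℕ, ∑ k ∈ A, E (fun ω => if W ω = k then (1 : ℝ) else 0)
      = E (fun ω => if W ω ∈ A then 1 else 0) := by
    intro A
    rw [← map_sum]
    congr 1
    ext ω
    simp
  have hE1 : E (fun _ => 1) = 1 := pathExp_one hP hι1 _ _
  have mono : ∀ g h : (ℕ → S) → ℝ, (∀ ω, g ω ≤ h ω) → E g ≤ E h := by
    intro g h hgh
    have := pathExp_nonneg hP0 hι0 (r₀ + ℓ + r₀) ω₀ (h - g) (fun ω => by simpa using hgh ω)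
    rw [map_sub] at this; linarith
  rw [tv_eq _ _ ℓ ?_ ?_ (poissonPMF_nonneg hr0) (poissonPMF_hasSum r), Finset.sum_sub_distrib, Esum]
  rotate_left
  · intro k hk
    have : (fun ω => if W ω = k then (1 : ℝ) else 0) = 0 := by
      ext ω
      have := windowCount_le i j r₀ ℓ ω
      rw [← hW] at this
      simp only [Pi.zero_apply, ite_eq_right_iff]; omega
    rw [this, map_zero]
  · rw [Esum]
    refine (congrArg E ?_).trans hE1
    ext ω
    have := windowCount_le i j r₀ ℓ ω
    rw [← hW] at this
    rw [if_pos (Finset.mem_range.2 (by omega))]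
  set A := (Finset.range (ℓ + 1)).filter (fun k => _root_.poissonPMF r k
    < E (fun ω => if W ω = k then (1 : ℝ) else 0)) with hA
  rcases hr0.eq_or_lt with h0 | hpos
  -- `r = 0`: both laws are the point mass at `0`, since `E W = r`.
  · have hRHS : 0 ≤ ℓ * ((2 * r₀ + 1) * (ι i * P i j) ^ 2 + 2 * B' + 2 * (r₀ - 1) * B
          + 12 * ε * (ι i * P i j)) := by
      have : (1 : ℝ) ≤ r₀ := by exact_mod_cast hr₀
      have : (0 : ℝ) ≤ r₀ - 1 := by linarith
      positivity
    have h0A : 0 ∉ A := by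
      intro h
      rw [hA, Finset.mem_filter, ← h0] at h
      have h2 := h.2
      have h3 := mono (fun ω => if W ω = 0 then (1 : ℝ) else 0) (fun _ => 1)
        (fun ω => by split_ifs <;> norm_num)
      simp only [_root_.poissonPMF, neg_zero, Real.exp_zero, pow_zero, Nat.factorial_zero] at h2
      norm_num at h2
      linarith
    have hEW : E (fun ω => (W ω : ℝ)) = 0 := by
      have : (fun ω => (W ω : ℝ)) = ∑ t ∈ Finset.Ico r₀ (r₀ + ℓ), hitR i j t := by
        ext ω; simp [hW, windowCount, hitR]
      rw [this, map_sum, h0, hr, Finset.sum_congr rfl (fun t ht => pathExp_hit hP hι i j t _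
        (by have := Finset.mem_Ico.1 ht; omega) ω₀)]
      simp
    have h1 := mono (fun ω => if W ω ∈ A then (1 : ℝ) else 0) (fun ω => (W ω : ℝ)) (fun ω => by
      split_ifs with h
      · have : W ω ≠ 0 := fun h' => h0A (h' ▸ h)
        exact_mod_cast Nat.one_le_iff_ne_zero.2 this
      · positivity)
    have h2 : 0 ≤ ∑ k ∈ A, _root_.poissonPMF r k :=
      Finset.sum_nonneg fun k _ => poissonPMF_nonneg hr0 k
    linarith
  · obtain ⟨f, hst, hf1, hf3⟩ := stein_exists hpos A
    refine le_trans (le_of_eq ?_) (chain_stein hP0 hP hι0 hι1 hι hε0 hε hr₀ hmix i j hB0 hB0' hB' hB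
      ℓ ω₀ hf1 hf3)
    rw [← hE, ← hW, ← hr]
    have e : (fun ω => r * f (W ω + 1) - (W ω : ℝ) * f (W ω))
        = (fun ω => if W ω ∈ A then (1 : ℝ) else 0)
          - (∑ k ∈ A, _root_.poissonPMF r k) • fun _ => (1 : ℝ) := by
      ext ω
      rw [hst]; simp
    rw [e, map_sub, map_smul, hE1, smul_eq_mul, mul_one]

end Assembly

/-! ### Block Markov chains -/

section Block

variable {K n : ℕ}

theorem clusterCard_pos {σ : Fin n → Fin K} (hσ : ∀ k, ∃ v, σ v = k) (k : Fin K) :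
    (1 : ℝ) ≤ clusterCard n σ k := by
  obtain ⟨v, hv⟩ := hσ k
  have : 0 < clusterCard n σ k := Finset.card_pos.2 ⟨v, by simp [hv]⟩
  exact_mod_cast this

theorem sum_cluster {σ : Fin n → Fin K} (hσ : ∀ k, ∃ v, σ v = k) (g : Fin K → ℝ) :
    ∑ v, g (σ v) / (clusterCard n σ (σ v) : ℝ) = ∑ k, g k := by
  rw [← Finset.sum_fiberwise Finset.univ σ]
  refine Finset.sum_congr rfl fun k _ => ?_
  have h := clusterCard_pos hσ k
  rw [Finset.sum_congr rfl (g := fun _ => g k / (clusterCard n σ k : ℝ)) (fun v hv => by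
    rw [(Finset.mem_filter.1 hv).2]), Finset.sum_const, nsmul_eq_mul]
  change (clusterCard n σ k : ℝ) * _ = _
  field_simp

/-- Powers of the block transition matrix reduce to powers of `p`. The exponent is at least one: the
identity matrix is not of this form. -/
theorem bmc_pow {σ : Fin n → Fin K} (hσ : ∀ k, ∃ v, σ v = k) (p : Matrix (Fin K) (Fin K) ℝ)
    (d : ℕ) (x y : Fin n) :
    ((Matrix.of (bmcTrans p σ)) ^ (d + 1)) x y
      = (p ^ (d + 1)) (σ x) (σ y) / (clusterCard n σ (σ y) : ℝ) := by
  induction d generalizing y with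
  | zero => simp [bmcTrans]
  | succ d ih =>
    rw [pow_succ, Matrix.mul_apply, pow_succ p, Matrix.mul_apply, Finset.sum_div,
      ← sum_cluster hσ]
    refine Finset.sum_congr rfl fun z _ => ?_
    rw [ih, Matrix.of_apply, bmcTrans]
    ring

theorem pow_stochastic {p : Matrix (Fin K) (Fin K) ℝ} (hp0 : ∀ i j, 0 ≤ p i j)
    (hp1 : ∀ i, ∑ j, p i j = 1) (d : ℕ) (i : Fin K) :
    (∀ j, 0 ≤ (p ^ d) i j) ∧ ∑ j, (p ^ d) i j = 1 := by
  induction d with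
  | zero => simp [Matrix.one_apply, apply_ite]
  | succ d ih =>
    simp only [pow_succ, Matrix.mul_apply]
    refine ⟨fun j => Finset.sum_nonneg fun k _ => mul_nonneg (ih.1 k) (hp0 k j), ?_⟩
    rw [Finset.sum_comm]
    simp only [← Finset.mul_sum, hp1, mul_one, ih.2]

theorem pow_le_one_entry {p : Matrix (Fin K) (Fin K) ℝ} (hp0 : ∀ i j, 0 ≤ p i j)
    (hp1 : ∀ i, ∑ j, p i j = 1) (d : ℕ) (i j : Fin K) : (p ^ d) i j ≤ 1 := by
  obtain ⟨h0, h1⟩ := pow_stochastic hp0 hp1 d i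
  rw [← h1]
  exact Finset.single_le_sum (fun k _ => h0 k) (Finset.mem_univ j)

theorem stationary_pow {p : Matrix (Fin K) (Fin K) ℝ} {pst : Fin K → ℝ}
    (hstat : ∀ j, ∑ i, pst i * p i j = pst j) (d : ℕ) (j : Fin K) :
    ∑ i, pst i * (p ^ d) i j = pst j := by
  induction d generalizing j with
  | zero => simp [Matrix.one_apply]
  | succ d ih =>
    simp only [pow_succ, Matrix.mul_apply, Finset.mul_sum]
    rw [Finset.sum_comm, ← hstat j]
    refine Finset.sum_congr rfl fun k _ => ?_
    rw [← ih k, Finset.sum_mul]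
    exact Finset.sum_congr rfl fun i _ => by ring

theorem stationary_pos {p : Matrix (Fin K) (Fin K) ℝ} {pst : Fin K → ℝ}
    (hprim : ∃ r : ℕ, 0 < r ∧ ∀ i j, 0 < (p ^ r) i j) (hpst0 : ∀ i, 0 ≤ pst i)
    (hpst1 : ∑ i, pst i = 1) (hstat : ∀ j, ∑ i, pst i * p i j = pst j) (j : Fin K) :
    0 < pst j := by
  obtain ⟨r, _, hr⟩ := hprim
  obtain ⟨i, hi⟩ : ∃ i, 0 < pst i := by
    by_contra hcon
    push Not at hcon
    have := Finset.sum_nonpos fun i (_ : i ∈ Finset.univ) => hcon i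
    linarith
  rw [← stationary_pow hstat r j]
  exact Finset.sum_pos' (fun k _ => mul_nonneg (hpst0 k) (hr k j).le)
    ⟨i, Finset.mem_univ i, mul_pos hi (hr i j)⟩

theorem edgeCount_window (ℓ a : ℕ) (e : Fin n × Fin n) (ω : ℕ → Fin n) :
    edgeCount n ℓ (fun i => ω (a + i)) e = windowCount e.1 e.2 a ℓ ω := by
  unfold edgeCount windowCount hit
  rw [Finset.card_filter, Finset.sum_Ico_eq_sum_range, Nat.add_sub_cancel_left,
    ← Fin.sum_univ_eq_sum_range (fun k => if ω (a + k) = e.1 ∧ ω (a + k + 1) = e.2 then 1 else 0)]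
  rfl

theorem pathLaw_toReal {ℓ : ℕ} {P : Matrix (Fin n) (Fin n) ℝ} {ι : Fin n → ℝ}
    (hP0 : ∀ x y, 0 ≤ P x y) (hι0 : ∀ x, 0 ≤ ι x) (hP : ∀ x, ∑ y, P x y = 1)
    (hι : ∀ y, ∑ x, ι x * P x y = ι y) (r₀ : ℕ) (ω₀ : ℕ → Fin n) (e : Fin n × Fin n) (k : ℕ) :
    (pathLaw n ℓ P ι {ω | edgeCount n ℓ ω e = k}).toReal
      = pathExp ι P (r₀ + ℓ + r₀) ω₀
          (fun ω => if windowCount e.1 e.2 r₀ ℓ ω = k then 1 else 0) := by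
  rw [pathExp_apply, localise hP hι r₀ ℓ _ (by omega)]
  · simp only [← edgeCount_window]
    rw [← path_sum ι r₀ ℓ (fun x => if edgeCount n ℓ x e = k then (1 : ℝ) else 0)]
    unfold pathLaw
    rw [Measure.finsetSum_apply, ENNReal.toReal_sum]
    · refine Finset.sum_congr rfl fun x _ => ?_
      have hx : 0 ≤ ι (x 0) * ∏ t : Fin ℓ, P (x t.castSucc) (x t.succ) :=
        mul_nonneg (hι0 _) (Finset.prod_nonneg fun _ _ => hP0 _ _)
      by_cases h : edgeCount n ℓ x e = k <;> simp [h, ENNReal.toReal_ofReal hx]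
    · intro x _
      rw [Measure.smul_apply, smul_eq_mul]
      exact ENNReal.mul_ne_top ENNReal.ofReal_ne_top (measure_ne_top _ _)
  · intro c hc ω y
    have : windowCount e.1 e.2 r₀ ℓ (update ω c y) = windowCount e.1 e.2 r₀ ℓ ω :=
      Finset.sum_congr rfl fun t ht => by
        have := Finset.mem_Ico.1 ht
        exact hit_indep _ _ t c (by omega) (by omega) ω y
    simp only [this]

/-- Both cases of the theorem at once, with `D` the product of the two cluster sizes; the term with
`i = j` comes from consecutive traversals of a self-loop. -/
theorem bmc_tv {p : Matrix (Fin K) (Fin K) ℝ}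
    (hp0 : ∀ i j, 0 ≤ p i j) (hp1 : ∀ i, ∑ j, p i j = 1)
    (hprim : ∃ r : ℕ, 0 < r ∧ ∀ i j, 0 < (p ^ r) i j)
    {pst : Fin K → ℝ} (hpst0 : ∀ i, 0 ≤ pst i) (hpst1 : ∑ i, pst i = 1)
    (hstat : ∀ j, ∑ i, pst i * p i j = pst j)
    {σ : Fin n → Fin K} (hσne : ∀ k, ∃ v : Fin n, σ v = k)
    (ℓ : ℕ) {ε : ℝ} (hε0 : 0 ≤ ε) (hε2 : ε ≤ 1 / 2) {r₀ : ℕ} (hr₀ : 1 ≤ r₀)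
    (hΔ : ∀ r : ℕ, r₀ ≤ r → ∀ x y : Fin K, |(p ^ r) x y - pst y| / pst y ≤ ε)
    (i j : Fin n) {D : ℝ} (hD : D = clusterCard n σ (σ i) * clusterCard n σ (σ j)) :
    dTVpoisson (pathLaw n ℓ (bmcTrans p σ) (bmcEquilib pst σ)) (i, j)
        (ℓ * pst (σ i) * p (σ i) (σ j) / D)
      ≤ ℓ * pst (σ i) * p (σ i) (σ j) * ((4 * r₀ - 1) / D ^ 2
          + (if i = j then 2 / (D * clusterCard n σ (σ j)) else 0) + 12 * ε / D) := by
  set P : Matrix (Fin n) (Fin n) ℝ := Matrix.of (bmcTrans p σ) with hPdef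
  set ι := bmcEquilib pst σ with hιdef
  have hpp := stationary_pos hprim hpst0 hpst1 hstat
  have hV := clusterCard_pos (n := n) hσne
  have hV0 : ∀ k, (0 : ℝ) < clusterCard n σ k := fun k => by linarith [hV k]
  have hP0 : ∀ x y, 0 ≤ P x y := fun x y => div_nonneg (hp0 _ _) (hV0 _).le
  have hP : ∀ x, ∑ y, P x y = 1 := fun x => by
    rw [← hp1 (σ x)]; exact sum_cluster hσne (p (σ x))
  have hι0 : ∀ x, 0 ≤ ι x := fun x => div_nonneg (hpst0 _) (hV0 _).le
  have hι1 : ∑ x, ι x = 1 := by rw [← hpst1]; exact sum_cluster hσne pst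
  have hι : ∀ y, ∑ x, ι x * P x y = ι y := by
    intro y
    have h := sum_cluster hσne (fun k => pst k * p k (σ y) / (clusterCard n σ (σ y) : ℝ))
    rw [← Finset.sum_div, hstat] at h
    rw [hιdef, bmcEquilib, ← h]
    refine Finset.sum_congr rfl fun x _ => ?_
    rw [hPdef, Matrix.of_apply, bmcEquilib, bmcTrans]
    ring
  have hmix : ∀ r, r₀ ≤ r → ∀ x y, |(P ^ r) x y - ι y| ≤ ε * ι y := by
    intro r hr x y
    obtain ⟨d, rfl⟩ : ∃ d, r = d + 1 := ⟨r - 1, by omega⟩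
    have h := hΔ (d + 1) hr (σ x) (σ y)
    rw [div_le_iff₀ (hpp _)] at h
    rw [hPdef, bmc_pow hσne, hιdef, bmcEquilib, ← sub_div, abs_div, abs_of_pos (hV0 (σ y)),
      ← mul_div_assoc]
    exact div_le_div_of_nonneg_right h (hV0 _).le
  set V₁ : ℝ := (clusterCard n σ (σ i) : ℝ) with hV₁
  set V₂ : ℝ := (clusterCard n σ (σ j) : ℝ) with hV₂
  have v1 : 0 < V₁ := hV0 _
  have v2 : 0 < V₂ := hV0 _
  have hD0 : 0 < D := by rw [hD]; positivity
  set b := pst (σ i) * p (σ i) (σ j) with hb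
  have hb0 : 0 ≤ b := mul_nonneg (hpst0 _) (hp0 _ _)
  have hpij : p (σ i) (σ j) ≤ 1 := by simpa using pow_le_one_entry hp0 hp1 1 (σ i) (σ j)
  have hπ1 : pst (σ i) ≤ 1 := by
    rw [← hpst1]; exact Finset.single_le_sum (fun k _ => hpst0 k) (Finset.mem_univ _)
  have hb1 : b ≤ 1 := mul_le_one₀ hπ1 (hp0 _ _) hpij
  have hPij : P i j = p (σ i) (σ j) / V₂ := rfl
  have hq : ι i * P i j = b / D := by
    rw [hPij, hιdef, bmcEquilib, hD, hb, div_mul_div_comm]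
  have tv := chain_tv hP0 hP hι0 hι1 hι hε0 hε2 hr₀ hmix i j (B := b / D ^ 2)
    (B' := if i = j then b / (D * V₂) else 0) (by positivity) (by split_ifs <;> positivity)
    (by
      rw [hq, hPij, pow_zero]
      split_ifs with h
      · have e1 : (1 : Matrix (Fin n) (Fin n) ℝ) j i = 1 := by rw [h, Matrix.one_apply_eq]
        rw [e1, mul_one, div_mul_div_comm]
        exact div_le_div_of_nonneg_right (mul_le_of_le_one_right hb0 hpij) (by positivity)
      · rw [Matrix.one_apply_ne (Ne.symm h)]; simp)
    (by
      intro d hd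
      obtain ⟨d, rfl⟩ : ∃ d', d = d' + 1 := ⟨d - 1, by omega⟩
      rw [hq, hPij, hPdef, bmc_pow hσne, ← hV₁]
      have h1 := pow_le_one_entry hp0 hp1 (d + 1) (σ j) (σ i)
      have h0 := (pow_stochastic hp0 hp1 (d + 1) (σ j)).1 (σ i)
      have e : b / D * ((p ^ (d + 1)) (σ j) (σ i) / V₁) * (p (σ i) (σ j) / V₂)
          = b * ((p ^ (d + 1)) (σ j) (σ i) * p (σ i) (σ j)) / D ^ 2 := by
        rw [hD]; field_simp
      rw [e]
      exact div_le_div_of_nonneg_right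
        (mul_le_of_le_one_right hb0 (mul_le_one₀ h1 (hp0 _ _) hpij)) (by positivity))
    ℓ (fun _ => i)
  rw [hq] at tv
  have er : (ℓ : ℝ) * pst (σ i) * p (σ i) (σ j) = ℓ * b := by rw [hb]; ring
  unfold dTVpoisson
  rw [er, mul_div_assoc]
  have el : ∀ k, (pathLaw n ℓ (bmcTrans p σ) ι {ω | edgeCount n ℓ ω (i, j) = k}).toReal
      = pathExp ι P (r₀ + ℓ + r₀) (fun _ => i)
          (fun ω => if windowCount i j r₀ ℓ ω = k then 1 else 0) := fun k =>
    pathLaw_toReal (P := P) hP0 hι0 hP hι r₀ (fun _ => i) (i, j) k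
  simp only [el]
  refine tv.trans ?_
  rw [mul_assoc (ℓ : ℝ) b]
  refine mul_le_mul_of_nonneg_left ?_ (Nat.cast_nonneg _)
  have hsq : (b / D) ^ 2 ≤ b / D ^ 2 := by
    rw [div_pow]
    exact div_le_div_of_nonneg_right (by nlinarith) (by positivity)
  have h2 := mul_le_mul_of_nonneg_left hsq (by positivity : (0 : ℝ) ≤ 2 * r₀ + 1)
  have e2 : b * ((4 * r₀ - 1) / D ^ 2 + (if i = j then 2 / (D * V₂) else 0) + 12 * ε / D)
      = (2 * r₀ + 1) * (b / D ^ 2) + 2 * (if i = j then b / (D * V₂) else 0)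
        + 2 * (r₀ - 1) * (b / D ^ 2) + 12 * ε * (b / D) := by
    split_ifs <;> ring
  rw [e2]
  linarith

end Block

/-- **Theorem (nonasymptotic Poisson approximation).** -/
theorem poisson_approximation_edge_count
    (K : ℕ) (hK : 1 ≤ K)
    (p : Matrix (Fin K) (Fin K) ℝ)
    (hp0 : ∀ i j, 0 ≤ p i j) (hp1 : ∀ i, ∑ j, p i j = 1)
    -- irreducible and aperiodic (equivalently, primitive)
    (hprim : ∃ r : ℕ, 0 < r ∧ ∀ i j, 0 < (p ^ r) i j)
    (pst : Fin K → ℝ) (hpst0 : ∀ i, 0 ≤ pst i) (hpst1 : ∑ i, pst i = 1)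
    (hstat : ∀ j, ∑ i, pst i * p i j = pst j)
    (n : ℕ) (hn : K ≤ n)
    (σ : Fin n → Fin K) (hσne : ∀ k, ∃ v : Fin n, σ v = k)
    (ℓ : ℕ) (hℓ : 1 ≤ ℓ)
    (ε : ℝ) (hε0 : 0 ≤ ε) (hε2 : ε ≤ 1 / 2)
    (r₀ : ℕ) (hr₀ : 1 ≤ r₀)
    -- the relative pointwise distance satisfies `Δ(r) ≤ ε` for all `r ≥ r₀`
    (hΔ : ∀ r : ℕ, r₀ ≤ r → ∀ x y : Fin K, |(p ^ r) x y - pst y| / pst y ≤ ε)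
    (k₁ k₂ : Fin K) :
    -- non-self-loop case
    (∀ e : Fin n × Fin n, σ e.1 = k₁ → σ e.2 = k₂ → e.1 ≠ e.2 →
      dTVpoisson (pathLaw n ℓ (bmcTrans p σ) (bmcEquilib pst σ)) e
          ((ℓ : ℝ) * pst k₁ * p k₁ k₂
            / ((clusterCard n σ k₁ : ℝ) * (clusterCard n σ k₂ : ℝ)))
        ≤ (ℓ : ℝ) * pst k₁ * p k₁ k₂ *
            ((4 * (r₀ : ℝ) - 1)
                / ((clusterCard n σ k₁ : ℝ) ^ 2 * (clusterCard n σ k₂ : ℝ) ^ 2)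
              + 12 * ε / ((clusterCard n σ k₁ : ℝ) * (clusterCard n σ k₂ : ℝ)))) ∧
    -- self-loop case
    (∀ v : Fin n, σ v = k₁ →
      dTVpoisson (pathLaw n ℓ (bmcTrans p σ) (bmcEquilib pst σ)) (v, v)
          ((ℓ : ℝ) * pst k₁ * p k₁ k₁ / (clusterCard n σ k₁ : ℝ) ^ 2)
        ≤ (ℓ : ℝ) * pst k₁ * p k₁ k₁ *
            ((4 * (r₀ : ℝ) - 1) / (clusterCard n σ k₁ : ℝ) ^ 4
              + 2 / (clusterCard n σ k₁ : ℝ) ^ 3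
              + 12 * ε / (clusterCard n σ k₁ : ℝ) ^ 2)) := by
  refine ⟨?_, ?_⟩
  · rintro ⟨i, j⟩ hi hj hij
    dsimp only at hi hj hij
    subst hi hj
    have h := bmc_tv hp0 hp1 hprim hpst0 hpst1 hstat hσne ℓ hε0 hε2 hr₀ hΔ i j rfl
    rw [if_neg hij, add_zero, mul_pow] at h
    exact h
  · intro v hv
    subst hv
    have h := bmc_tv hp0 hp1 hprim hpst0 hpst1 hstat hσne ℓ hε0 hε2 hr₀ hΔ v v
      (D := (clusterCard n σ (σ v) : ℝ) ^ 2) (by ring)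
    rw [if_pos rfl, ← pow_mul, ← pow_succ] at h
    exact h

end
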